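/- Let (G_k)_{k=1}^N be arbitrary operators, with G_k acting on H_k, and let G = Σ_{k=1}^N (extension of G_k to H). Then for every density matrix ρ on H, the coherent part of the variance satisfies Var_ρ(G) − Σ_{k=1}^N Var_{ρ_k}(G_k) ≤ 2·Σ_{k≠ℓ} ‖G_k‖_∞·‖G_ℓ‖_∞·√(min(s_k, s_ℓ)), where the sum runs over all ordered pairs (k,ℓ) with k ≠ ℓ. -/

import Mathlib

open scoped BigOperators Kronecker Matrix ComplexOrder

noncomputable section
namespace Paper

/-- A density matrix: a positive semidefinite operator of trace one. -/
def IsDensityMatrix {n : Type*} [Fintype n] (ρ : Matrix n n ℂ) : Prop :=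
  ρ.PosSemidef ∧ ρ.trace = 1

/-- The operator norm `‖A‖_∞` (largest singular value) of a matrix,
as the operator norm of the induced map on Euclidean space. -/
noncomputable def opNorm {n : Type*} [Fintype n] [DecidableEq n] (A : Matrix n n ℂ) : ℝ :=
  ‖LinearMap.toContinuousLinearMap (Matrix.toEuclideanLin A)‖

/-- Von Neumann entropy `−∑ λ ln λ` over the eigenvalues; since `Real.log 0 = 0`
in Mathlib, the convention `0 · ln 0 = 0` is automatic. -/
noncomputable def entropy {n : Type*} [Fintype n] [DecidableEq n] (σ : Matrix n n ℂ) : ℝ :=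
  if h : σ.IsHermitian then -∑ i, h.eigenvalues i * Real.log (h.eigenvalues i) else 0

/-- The variance `Var_ρ(A) = Tr[ρ A† A] − |Tr[ρ A]|²`. -/
noncomputable def variance {n : Type*} [Fintype n] (ρ A : Matrix n n ℂ) : ℝ :=
  (ρ * (Aᴴ * A)).trace.re - ‖(ρ * A).trace‖ ^ 2

/-- The trace norm `‖A‖₁ = Tr √(A†A)`: the sum of the singular values. -/
noncomputable def traceNorm {n : Type*} [Fintype n] [DecidableEq n] (A : Matrix n n ℂ) : ℝ :=
  ∑ i, Real.sqrt ((Matrix.posSemidef_conjTranspose_mul_self A).1.eigenvalues i)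

/-- The pure state `|v⟩⟨v|` associated with a vector `v`. -/
def pureState {n : Type*} (v : n → ℂ) : Matrix n n ℂ :=
  Matrix.of fun x y => v x * (starRingEnd ℂ) (v y)

/-- The expectation value `⟨v|M|v⟩`. -/
noncomputable def expval {n : Type*} [Fintype n] (M : Matrix n n ℂ) (v : n → ℂ) : ℂ :=
  ∑ x, ∑ y, (starRingEnd ℂ) (v x) * M x y * v y

variable {N : ℕ} {d : Fin N → Type*} [∀ k, Fintype (d k)] [∀ k, DecidableEq (d k)]

/-- Extension of a local operator on the `k`-th factor to the `N`-fold tensor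
product `H = H_1 ⊗ ⋯ ⊗ H_N`, tensoring with the identity on every other factor.
(The tensor product is realized with index set `∀ j, d j`.) -/
def extendAt (k : Fin N) (A : Matrix (d k) (d k) ℂ) : Matrix (∀ j, d j) (∀ j, d j) ℂ :=
  Matrix.of fun x y => if ∀ j, j ≠ k → x j = y j then A (x k) (y k) else 0

/-- Reduced density matrix on the `k`-th factor: partial trace over all other factors. -/
noncomputable def reduce (k : Fin N) (ρ : Matrix (∀ j, d j) (∀ j, d j) ℂ) :
    Matrix (d k) (d k) ℂ :=
  Matrix.of fun a b => ∑ x : ∀ j, d j, if x k = a then ρ x (Function.update x k b) else 0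


section StateSeminorm

variable {n : Type*} [Fintype n] {ρ : Matrix n n ℂ}

/-- The seminorm `√Tr[ρ X† X]` on operators induced by `ρ`. -/
noncomputable def stateNorm (ρ X : Matrix n n ℂ) : ℝ :=
  Real.sqrt (ρ * (Xᴴ * X)).trace.re

lemma stateNorm_nonneg (ρ X : Matrix n n ℂ) : 0 ≤ stateNorm ρ X := Real.sqrt_nonneg _

lemma trace_mul_conjTranspose_mul_self_nonneg (hρ : ρ.PosSemidef) (X : Matrix n n ℂ) :
    0 ≤ (ρ * (Xᴴ * X)).trace := by
  have h := (hρ.mul_mul_conjTranspose_same X).trace_nonneg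
  rwa [mul_assoc, Matrix.trace_mul_comm, mul_assoc] at h

lemma stateNorm_sq (hρ : ρ.PosSemidef) (X : Matrix n n ℂ) :
    stateNorm ρ X ^ 2 = (ρ * (Xᴴ * X)).trace.re :=
  Real.sq_sqrt (Complex.le_def.1 (trace_mul_conjTranspose_mul_self_nonneg hρ X)).1

lemma trace_mul_conjTranspose (hρ : ρ.IsHermitian) (X : Matrix n n ℂ) :
    (ρ * Xᴴ).trace = star (ρ * X).trace := by
  rw [← Matrix.trace_conjTranspose, Matrix.conjTranspose_mul, hρ.eq, Matrix.trace_mul_comm]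

/-- Cauchy–Schwarz for the sesquilinear form `Tr[ρ X† Y]`. -/
lemma norm_trace_mul_le (hρ : ρ.PosSemidef) (X Y : Matrix n n ℂ) :
    ‖(ρ * (Xᴴ * Y)).trace‖ ≤ stateNorm ρ X * stateNorm ρ Y := by
  let _ : SeminormedAddCommGroup (Matrix n n ℂ) := ρ.toMatrixSeminormedAddCommGroup hρ
  let _ : InnerProductSpace ℂ (Matrix n n ℂ) := ρ.toMatrixInnerProductSpace hρ
  have inner_eq (U V : Matrix n n ℂ) : inner ℂ U V = (ρ * (Uᴴ * V)).trace := by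
    change (V * ρ * Uᴴ).trace = _
    rw [mul_assoc, Matrix.trace_mul_comm, mul_assoc]
  have norm_eq (U : Matrix n n ℂ) : stateNorm ρ U = ‖U‖ := by
    rw [stateNorm, ← inner_eq, norm_eq_sqrt_re_inner (𝕜 := ℂ) U]
    rfl
  rw [norm_eq, norm_eq, ← inner_eq]
  exact norm_inner_le_norm X Y

end StateSeminorm

section OperatorNorm

open scoped Matrix.Norms.L2Operator MatrixOrder

variable {n : Type*} [Fintype n] [DecidableEq n] {ρ : Matrix n n ℂ}

lemma trace_mul_nonneg (hρ : ρ.PosSemidef) {X : Matrix n n ℂ} (hX : X.PosSemidef) :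
    0 ≤ (ρ * X).trace := by
  obtain ⟨C, rfl⟩ := CStarAlgebra.nonneg_iff_eq_star_mul_self.1 (Matrix.nonneg_iff_posSemidef.2 hX)
  exact trace_mul_conjTranspose_mul_self_nonneg hρ C

lemma stateNorm_mul_le (hρ : ρ.PosSemidef) (X Y : Matrix n n ℂ) :
    stateNorm ρ (X * Y) ≤ ‖X‖ * stateNorm ρ Y := by
  have hXX : IsSelfAdjoint (star X * X) := .star_mul_self X
  have h : star Y * (star X * X) * Y ≤ ‖star X * X‖ • (star Y * Y) :=
    CStarAlgebra.star_left_conjugate_le_norm_smul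
  have h2 := (Complex.le_def.1 (trace_mul_nonneg hρ (Matrix.le_iff.1 h))).1
  rw [Complex.zero_re, CStarRing.norm_star_mul_self, mul_sub, Matrix.trace_sub, Complex.sub_re,
    mul_smul_comm, Matrix.trace_smul, Complex.smul_re, smul_eq_mul] at h2
  refine (sq_le_sq₀ (stateNorm_nonneg _ _)
    (mul_nonneg (norm_nonneg _) (stateNorm_nonneg _ _))).1 ?_
  rw [mul_pow, stateNorm_sq hρ, stateNorm_sq hρ, Matrix.conjTranspose_mul]
  simp only [Matrix.star_eq_conjTranspose, mul_assoc] at h2 ⊢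
  nlinarith

lemma stateNorm_one (hρ : IsDensityMatrix ρ) : stateNorm ρ 1 = 1 := by
  simp [stateNorm, hρ.2]

lemma stateNorm_le_norm (hρ : IsDensityMatrix ρ) (X : Matrix n n ℂ) : stateNorm ρ X ≤ ‖X‖ := by
  simpa [stateNorm_one hρ] using stateNorm_mul_le hρ.1 X 1

/-- The operator `X` shifted to have zero expectation value in `ρ`. -/
noncomputable def centered (ρ X : Matrix n n ℂ) : Matrix n n ℂ := X - (ρ * X).trace • 1

lemma trace_mul_centered (hρ : IsDensityMatrix ρ) (X : Matrix n n ℂ) :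
    (ρ * centered ρ X).trace = 0 := by
  simp [centered, mul_sub, hρ.2]

lemma centered_conjTranspose (hρ : ρ.IsHermitian) (X : Matrix n n ℂ) :
    (centered ρ X)ᴴ = centered ρ Xᴴ := by
  simp [centered, trace_mul_conjTranspose hρ]

lemma stateNorm_centered_le (hρ : IsDensityMatrix ρ) (X : Matrix n n ℂ) :
    stateNorm ρ (centered ρ X) ≤ stateNorm ρ X := by
  refine (sq_le_sq₀ (stateNorm_nonneg _ _) (stateNorm_nonneg _ _)).1 ?_
  have h : (ρ * ((centered ρ X)ᴴ * centered ρ X)).trace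
      = (ρ * (Xᴴ * X)).trace - star (ρ * X).trace * (ρ * X).trace := by
    rw [centered_conjTranspose hρ.1.1]
    nth_rw 2 [centered]
    rw [mul_sub, mul_sub, Matrix.trace_sub, mul_smul_comm, mul_smul_comm, mul_one,
      Matrix.trace_smul, trace_mul_centered hρ, smul_zero, sub_zero, centered, sub_mul, mul_sub,
      Matrix.trace_sub, trace_mul_conjTranspose hρ.1.1]
    simp
  rw [stateNorm_sq hρ.1, stateNorm_sq hρ.1, h, Complex.sub_re]
  have : 0 ≤ (star (ρ * X).trace * (ρ * X).trace).re :=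
    (Complex.le_def.1 (star_mul_self_nonneg (ρ * X).trace)).1
  linarith

lemma stateNorm_centered_le_norm (hρ : IsDensityMatrix ρ) (X : Matrix n n ℂ) :
    stateNorm ρ (centered ρ X) ≤ ‖X‖ :=
  (stateNorm_centered_le hρ X).trans (stateNorm_le_norm hρ X)

/-- The covariance `Tr[ρ X Y] − Tr[ρ X] Tr[ρ Y]`. -/
noncomputable def covariance (ρ X Y : Matrix n n ℂ) : ℂ :=
  (ρ * (X * Y)).trace - (ρ * X).trace * (ρ * Y).trace

lemma covariance_eq_trace_mul_centered (X Y : Matrix n n ℂ) :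
    covariance ρ X Y = (ρ * (X * centered ρ Y)).trace := by
  simp [covariance, centered, mul_sub, mul_comm]

lemma norm_covariance_le (hρ : IsDensityMatrix ρ) (X Y : Matrix n n ℂ) :
    ‖covariance ρ X Y‖ ≤ ‖X‖ * ‖Y‖ := by
  rw [covariance_eq_trace_mul_centered]
  nth_rw 1 [← Matrix.conjTranspose_conjTranspose X]
  refine (norm_trace_mul_le hρ.1 _ _).trans ?_
  refine mul_le_mul ?_ (stateNorm_centered_le_norm hρ Y) (stateNorm_nonneg _ _) (norm_nonneg _)
  simpa only [Matrix.l2_opNorm_conjTranspose] using stateNorm_le_norm hρ Xᴴ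

/-- If `P` is a projection compressing `X` to a multiple of `P`, the covariance of `X` with an
operator commuting with `X` and `P` is controlled by the weight of `ρ` outside `P`. -/
lemma norm_covariance_le_of_compression (hρ : IsDensityMatrix ρ) {X Y P : Matrix n n ℂ} {c : ℂ}
    {a : ℝ} (hX : ‖X‖ ≤ a) (hP : IsStarProjection P) (hPXP : P * X * P = c • P)
    (hc : ‖c‖ ≤ a)
    (hXY : Commute X Y) (hPY : Commute P Y) :
    ‖covariance ρ X Y‖ ≤ 3 * Real.sqrt (1 - (ρ * P).trace.re) * (a * ‖Y‖) := by
  set Q : Matrix n n ℂ := 1 - P with hQ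
  set B := centered ρ Y with hB
  have hQs : Qᴴ = Q := hP.one_sub.isSelfAdjoint
  have hPs : Pᴴ = P := hP.isSelfAdjoint
  have hQQ : Q * Q = Q := hP.one_sub.isIdempotentElem
  have hQn : stateNorm ρ Q = Real.sqrt (1 - (ρ * P).trace.re) := by
    rw [stateNorm, hQs, hQQ, hQ, mul_sub, mul_one, Matrix.trace_sub, hρ.2]
    simp
  have hBn : stateNorm ρ B ≤ ‖Y‖ := stateNorm_centered_le_norm hρ Y
  have hBn' : stateNorm ρ Bᴴ ≤ ‖Y‖ := by
    rw [hB, centered_conjTranspose hρ.1.1]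
    simpa only [Matrix.l2_opNorm_conjTranspose] using stateNorm_centered_le_norm hρ Yᴴ
  have hPB : Commute P B := hPY.sub_right ((Commute.one_right P).smul_right _)
  have hXB : Commute X B := hXY.sub_right ((Commute.one_right X).smul_right _)
  have hQB : Commute Q B := (Commute.one_left B).sub_left hPB
  have split : X * B = -(c • (Qᴴ * B)) + c • B + Qᴴ * (X * B)
      + (Xᴴ * (P * Bᴴ))ᴴ * Q := by
    have e : (Xᴴ * (P * Bᴴ))ᴴ * Q = (P * X * Q) * B := by
      simp only [Matrix.conjTranspose_mul, Matrix.conjTranspose_conjTranspose, hPs]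
      rw [mul_assoc (P * X), hQB.eq, ← mul_assoc, (hPB.mul_left hXB).eq]
      simp only [mul_assoc]
    rw [e, hQs]
    have : P * X * Q = P * X - c • P := by rw [hQ, mul_sub, hPXP, mul_one]
    rw [this, hQ]
    simp only [sub_mul, one_mul, smul_sub, smul_mul_assoc, mul_assoc]
    abel
  have ha : 0 ≤ a := (norm_nonneg X).trans hX
  have t1 : ‖(ρ * (Qᴴ * B)).trace‖ ≤ Real.sqrt (1 - (ρ * P).trace.re) * ‖Y‖ := by
    refine (norm_trace_mul_le hρ.1 _ _).trans ?_
    rw [hQn]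
    gcongr
  have t2 : ‖(ρ * (Qᴴ * (X * B))).trace‖ ≤ Real.sqrt (1 - (ρ * P).trace.re) * (a * ‖Y‖) := by
    refine (norm_trace_mul_le hρ.1 _ _).trans ?_
    rw [hQn]
    gcongr
    exact (stateNorm_mul_le hρ.1 _ _).trans (mul_le_mul hX hBn (stateNorm_nonneg _ _) ha)
  have t3 : ‖(ρ * ((Xᴴ * (P * Bᴴ))ᴴ * Q)).trace‖
      ≤ (a * ‖Y‖) * Real.sqrt (1 - (ρ * P).trace.re) := by
    refine (norm_trace_mul_le hρ.1 _ _).trans ?_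
    rw [hQn]
    gcongr
    refine (stateNorm_mul_le hρ.1 _ _).trans ?_
    rw [Matrix.l2_opNorm_conjTranspose]
    refine mul_le_mul hX ?_ (stateNorm_nonneg _ _) ha
    refine (stateNorm_mul_le hρ.1 _ _).trans ?_
    have := hP.norm_le
    have h0 : 0 ≤ stateNorm ρ Bᴴ := stateNorm_nonneg _ _
    nlinarith
  rw [covariance_eq_trace_mul_centered, ← hB, split]
  simp only [mul_add, Matrix.trace_add, mul_neg, mul_smul_comm, Matrix.trace_neg,
    Matrix.trace_smul, smul_eq_mul]
  rw [hB, trace_mul_centered hρ, ← hB, mul_zero, add_zero]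
  refine (norm_add₃_le).trans ?_
  rw [norm_neg, norm_mul]
  have := mul_le_mul hc t1 (norm_nonneg _) ha
  linarith

end OperatorNorm

section ShannonEntropy

lemma quarter_le_log_nine_div_seven : (1 / 4 : ℝ) ≤ Real.log (9 / 7) := by
  have h : Real.log (Real.exp 1) ≤ Real.log ((9 / 7) ^ 4) :=
    Real.log_le_log (Real.exp_pos 1) (by linarith [Real.exp_one_lt_d9])
  rw [Real.log_exp, Real.log_pow] at h
  push_cast at h
  linarith

lemma log_nine_div_two_ge : (3 / 2 - 1 / 36 : ℝ) ≤ Real.log (9 / 2) := by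
  have h : Real.log (9 / 2) = 2 * Real.log 2 + Real.log (9 / 8) := by
    rw [show (9 / 2 : ℝ) = 2 ^ 2 * (9 / 8) by norm_num, Real.log_mul (by norm_num) (by norm_num),
      Real.log_pow]
    push_cast
    ring
  have h2 := Real.one_sub_inv_le_log_of_pos (show (0 : ℝ) < 9 / 8 by norm_num)
  rw [h]
  linarith [Real.log_two_gt_d9]

/-- A finite probability distribution of entropy below `1/4` has an atom whose complement has
mass at most `4/9` of the entropy. -/
lemma exists_one_sub_le_shannonEntropy {ι : Type*} [Fintype ι] {p : ι → ℝ}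
    (hp : ∀ i, 0 ≤ p i) (hsum : ∑ i, p i = 1) :
    ∃ i, 1 / 4 ≤ -∑ j, p j * Real.log (p j) ∨
      9 / 4 * (1 - p i) ≤ -∑ j, p j * Real.log (p j) := by
  classical
  have : Nonempty ι := by
    by_contra h
    rw [not_nonempty_iff] at h
    simp at hsum
  obtain ⟨i, -, hi⟩ := Finset.exists_max_image Finset.univ p Finset.univ_nonempty
  refine ⟨i, ?_⟩
  have hrest : ∑ j ∈ Finset.univ.erase i, p j = 1 - p i := by
    rw [← hsum, ← Finset.add_sum_erase _ _ (Finset.mem_univ i)]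
    ring
  have hpi : 0 < p i := by
    refine (hp i).lt_of_ne fun h => ?_
    have h0 : ∀ j, p j = 0 := fun j => le_antisymm (h ▸ hi j (Finset.mem_univ j)) (hp j)
    simp [h0] at hsum
  have mul_neg_log_ge {j : ι} {t : ℝ} (ht : p j ≤ t) :
      p j * -Real.log t ≤ p j * -Real.log (p j) := by
    rcases (hp j).eq_or_lt with h | h
    · simp [← h]
    · exact mul_le_mul_of_nonneg_left (neg_le_neg (Real.log_le_log h ht)) (hp j)
  simp only [← Finset.sum_neg_distrib, ← mul_neg]
  by_cases hq : p i ≤ 7 / 9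
  · left
    calc (1 / 4 : ℝ) ≤ -Real.log (7 / 9) := by
          rw [← Real.log_inv]
          norm_num
          linarith [quarter_le_log_nine_div_seven]
      _ = ∑ j, p j * -Real.log (7 / 9) := by rw [← Finset.sum_mul, hsum, one_mul]
      _ ≤ _ := Finset.sum_le_sum fun j hj => mul_neg_log_ge ((hi j hj).trans hq)
  · right
    push Not at hq
    have hlog : 3 / 2 - 1 / 36 ≤ -Real.log (2 / 9) := by
      rw [← Real.log_inv]
      norm_num
      linarith [log_nine_div_two_ge]
    have hmain : p i * (1 - p i) ≤ p i * -Real.log (p i) :=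
      mul_le_mul_of_nonneg_left (by linarith [Real.log_le_sub_one_of_pos hpi]) hpi.le
    have hle : 0 ≤ 1 - p i := hrest ▸ Finset.sum_nonneg fun j _ => hp j
    rw [← Finset.add_sum_erase _ _ (Finset.mem_univ i)]
    have hothers : (1 - p i) * -Real.log (2 / 9) ≤
        ∑ j ∈ Finset.univ.erase i, p j * -Real.log (p j) := by
      rw [← hrest, Finset.sum_mul]
      refine Finset.sum_le_sum fun j hj => mul_neg_log_ge ?_
      have := Finset.single_le_sum (fun k _ => hp k) hj
      linarith
    nlinarith

end ShannonEntropy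

section Local

lemma forall_ne_eq_iff_eq_update {ι : Type*} [DecidableEq ι] {α : ι → Type*} {k : ι}
    {x z : ∀ j, α j} :
    (∀ j, j ≠ k → x j = z j) ↔ z = Function.update x k (z k) := by
  rw [Function.eq_update_iff]
  simp [eq_comm]

/-- A sum over the configurations agreeing with `x` away from `k` is a sum over `d k`. -/
lemma sum_ite_forall_ne_eq (k : Fin N) (x : ∀ j, d j) (f : (∀ j, d j) → ℂ) :
    (∑ z, if ∀ j, j ≠ k → x j = z j then f z else 0) = ∑ a, f (Function.update x k a) := by
  rw [← Finset.sum_filter]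
  refine Finset.sum_nbij' (fun z => z k) (fun a => Function.update x k a) ?_ ?_ ?_ ?_ ?_
  · simp
  · intro a _
    simp +contextual
  · intro z hz
    exact (forall_ne_eq_iff_eq_update.1 (Finset.mem_filter.1 hz).2).symm
  · simp
  · intro z hz
    simp only [← forall_ne_eq_iff_eq_update.1 (Finset.mem_filter.1 hz).2]

lemma extendAt_mul_apply (k : Fin N) (A : Matrix (d k) (d k) ℂ)
    (M : Matrix (∀ j, d j) (∀ j, d j) ℂ) (x y : ∀ j, d j) :
    (extendAt k A * M) x y = ∑ a, A (x k) a * M (Function.update x k a) y := by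
  simp only [Matrix.mul_apply, extendAt, Matrix.of_apply, ite_mul, zero_mul]
  rw [sum_ite_forall_ne_eq k x (fun z => A (x k) (z k) * M z y)]
  simp

lemma forall_ne_update_eq_iff {ι : Type*} [DecidableEq ι] {α : ι → Type*} {k : ι}
    {x y : ∀ j, α j} {a : α k} :
    (∀ j, j ≠ k → Function.update x k a j = y j) ↔ ∀ j, j ≠ k → x j = y j :=
  forall₂_congr fun j hj => by rw [Function.update_of_ne hj]

/-- `extendAt k` as a homomorphism of star algebras. -/
def extendAtHom (k : Fin N) :
    Matrix (d k) (d k) ℂ →⋆ₐ[ℂ] Matrix (∀ j, d j) (∀ j, d j) ℂ where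
  toFun := extendAt k
  map_one' := by
    ext x y
    simp only [extendAt, Matrix.of_apply, Matrix.one_apply]
    by_cases h : x = y
    · simp [h]
    · have : ¬((∀ j, j ≠ k → x j = y j) ∧ x k = y k) := fun ⟨h1, h2⟩ =>
        h (funext fun j => if hj : j = k then hj ▸ h2 else h1 j hj)
      simp only [h, if_false]
      grind
  map_mul' A B := by
    ext x y
    rw [extendAt_mul_apply]
    simp only [extendAt, Matrix.of_apply, forall_ne_update_eq_iff, Function.update_self,
      Matrix.mul_apply]
    split_ifs <;> simp
  map_zero' := by
    ext x y
    simp [extendAt]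
  map_add' A B := by
    ext x y
    simp only [extendAt, Matrix.of_apply, Matrix.add_apply]
    split_ifs <;> simp
  commutes' r := by
    ext x y
    simp only [extendAt, Matrix.of_apply, Matrix.algebraMap_matrix_apply]
    by_cases h : x = y
    · simp [h]
    · have : ¬((∀ j, j ≠ k → x j = y j) ∧ x k = y k) := fun ⟨h1, h2⟩ =>
        h (funext fun j => if hj : j = k then hj ▸ h2 else h1 j hj)
      simp only [h, if_false]
      grind
  map_star' A := by
    ext x y
    simp only [extendAt, Matrix.of_apply, Matrix.star_apply, eq_comm]
    split_ifs <;> simp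

@[simp]
lemma extendAtHom_apply (k : Fin N) (A : Matrix (d k) (d k) ℂ) :
    extendAtHom k A = extendAt k A := rfl

lemma extendAt_conjTranspose (k : Fin N) (A : Matrix (d k) (d k) ℂ) :
    extendAt k Aᴴ = (extendAt k A)ᴴ :=
  map_star (extendAtHom k) A

lemma extendAt_mul (k : Fin N) (A B : Matrix (d k) (d k) ℂ) :
    extendAt k (A * B) = extendAt k A * extendAt k B :=
  map_mul (extendAtHom k) A B

lemma commute_extendAt {k l : Fin N} (hkl : k ≠ l) (A : Matrix (d k) (d k) ℂ)
    (B : Matrix (d l) (d l) ℂ) : Commute (extendAt k A) (extendAt l B) := by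
  have key {k l : Fin N} (hkl : k ≠ l) (A : Matrix (d k) (d k) ℂ) (B : Matrix (d l) (d l) ℂ)
      (x y : ∀ j, d j) : (extendAt k A * extendAt l B) x y =
        if ∀ j, j ≠ k → j ≠ l → x j = y j then A (x k) (y k) * B (x l) (y l) else 0 := by
    rw [extendAt_mul_apply, Finset.sum_eq_single (y k)]
    · simp only [extendAt, Matrix.of_apply, Function.update_of_ne hkl.symm]
      have : (∀ j, j ≠ l → Function.update x k (y k) j = y j) ↔
          ∀ j, j ≠ k → j ≠ l → x j = y j := by
        refine forall_congr' fun j => ?_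
        by_cases hj : j = k
        · subst hj
          simp
        · simp [hj]
      simp only [this, mul_ite, mul_zero]
    · intro a _ ha
      have : ¬∀ j, j ≠ l → Function.update x k a j = y j := fun h => ha (by simpa using h k hkl)
      simp [extendAt, this]
    · simp
  ext x y
  rw [key hkl, key hkl.symm]
  have : (∀ j, j ≠ k → j ≠ l → x j = y j) ↔ ∀ j, j ≠ l → j ≠ k → x j = y j :=
    forall_congr' fun j => ⟨fun h a b => h b a, fun h a b => h b a⟩
  simp only [this, mul_comm]

/-- The reduced density matrix reproduces the expectation values of local operators. -/
lemma trace_reduce_mul (k : Fin N) (ρ : Matrix (∀ j, d j) (∀ j, d j) ℂ)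
    (A : Matrix (d k) (d k) ℂ) : (reduce k ρ * A).trace = (ρ * extendAt k A).trace := by
  have h (x : ∀ j, d j) :
      (ρ * extendAt k A) x x = ∑ b, ρ x (Function.update x k b) * A b (x k) := by
    simp only [Matrix.mul_apply, extendAt, Matrix.of_apply, mul_ite, mul_zero,
      eq_comm (b := x _)]
    rw [sum_ite_forall_ne_eq k x (fun z => ρ x z * A (z k) (x k))]
    simp
  simp only [Matrix.trace, Matrix.diag_apply, h]
  simp only [Matrix.mul_apply, reduce, Matrix.of_apply, Finset.sum_mul, ite_mul, zero_mul]
  rw [Finset.sum_comm]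
  simp only [Finset.sum_comm (s := (Finset.univ : Finset (d k)))
    (t := (Finset.univ : Finset (∀ j, d j)))]
  rw [Finset.sum_comm]
  simp only [Finset.sum_ite_eq, Finset.mem_univ, if_true]
  rw [Finset.sum_comm]

end Local

section EntropyBound

open scoped Matrix.Norms.L2Operator MatrixOrder

lemma opNorm_eq_norm {n : Type*} [Fintype n] [DecidableEq n] (A : Matrix n n ℂ) :
    opNorm A = ‖A‖ := rfl

lemma norm_extendAt_le (k : Fin N) (A : Matrix (d k) (d k) ℂ) : ‖extendAt k A‖ ≤ ‖A‖ :=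
  NonUnitalStarAlgHom.norm_apply_le (extendAtHom k) A

lemma reduce_posSemidef (k : Fin N) {ρ : Matrix (∀ j, d j) (∀ j, d j) ℂ} (hρ : ρ.PosSemidef) :
    (reduce k ρ).PosSemidef := by
  have entry (a b : d k) : reduce k ρ a b = (ρ * extendAt k (Matrix.single b a 1)).trace := by
    rw [← trace_reduce_mul, Matrix.trace_mul_single]
    simp
  refine Matrix.PosSemidef.of_dotProduct_mulVec_nonneg ?_ fun v => ?_
  · ext a b
    rw [Matrix.conjTranspose_apply, entry, entry, ← trace_mul_conjTranspose hρ.1,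
      ← extendAt_conjTranspose, Matrix.conjTranspose_single, star_one]
  · obtain ⟨C, hC⟩ := CStarAlgebra.nonneg_iff_eq_star_mul_self.1
      (Matrix.nonneg_iff_posSemidef.2 (Matrix.posSemidef_vecMulVec_self_star v))
    rw [dotProduct_comm, ← Matrix.trace_vecMulVec, ← Matrix.mul_vecMulVec, trace_reduce_mul, hC,
      Matrix.star_eq_conjTranspose, extendAt_mul, extendAt_conjTranspose]
    exact trace_mul_conjTranspose_mul_self_nonneg hρ _

lemma reduce_isDensityMatrix (k : Fin N) {ρ : Matrix (∀ j, d j) (∀ j, d j) ℂ}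
    (hρ : IsDensityMatrix ρ) : IsDensityMatrix (reduce k ρ) := by
  refine ⟨reduce_posSemidef k hρ.1, ?_⟩
  rw [← mul_one (reduce k ρ), trace_reduce_mul, ← extendAtHom_apply, map_one, mul_one, hρ.2]

/-- A unit vector `v` yields the rank-one projection `|v⟩⟨v|`. -/
lemma isStarProjection_vecMulVec {n : Type*} [Fintype n] {v : n → ℂ} (hv : star v ⬝ᵥ v = 1) :
    IsStarProjection (Matrix.vecMulVec v (star v)) where
  isIdempotentElem := by
    rw [IsIdempotentElem, Matrix.vecMulVec_mul_vecMulVec, hv]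
    simp
  isSelfAdjoint := by
    rw [IsSelfAdjoint, Matrix.star_eq_conjTranspose, Matrix.conjTranspose_vecMulVec, star_star]

lemma vecMulVec_mul_mul_vecMulVec {n : Type*} [Fintype n] (A : Matrix n n ℂ) (v : n → ℂ) :
    Matrix.vecMulVec v (star v) * A * Matrix.vecMulVec v (star v) =
      (star v ⬝ᵥ A *ᵥ v) • Matrix.vecMulVec v (star v) := by
  rw [mul_assoc, Matrix.mul_vecMulVec, Matrix.vecMulVec_mul_vecMulVec]
  ext i j
  simp [Matrix.vecMulVec_apply, mul_assoc, mul_comm]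

/-- Local operators on distinct factors have covariance controlled by the entropy of either
reduced state. -/
lemma norm_covariance_extendAt_le {k l : Fin N} (hkl : k ≠ l)
    {ρ : Matrix (∀ j, d j) (∀ j, d j) ℂ} (hρ : IsDensityMatrix ρ)
    (A : Matrix (d k) (d k) ℂ) (B : Matrix (d l) (d l) ℂ) :
    ‖covariance ρ (extendAt k A) (extendAt l B)‖ ≤
      2 * (opNorm A * opNorm B * Real.sqrt (entropy (reduce k ρ))) := by
  have hσ := reduce_isDensityMatrix k hρ
  set σ := reduce k ρ with hσdef
  have hent : entropy σ = -∑ i, hσ.1.1.eigenvalues i * Real.log (hσ.1.1.eigenvalues i) :=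
    dif_pos hσ.1.1
  have hsum : ∑ i, hσ.1.1.eigenvalues i = 1 := by
    refine Complex.ofReal_injective ?_
    rw [Complex.ofReal_sum, Complex.ofReal_one]
    exact hσ.1.1.trace_eq_sum_eigenvalues.symm.trans hσ.2
  obtain ⟨i, hi⟩ := exists_one_sub_le_shannonEntropy hσ.1.eigenvalues_nonneg hsum
  rw [← hent] at hi
  rw [opNorm_eq_norm, opNorm_eq_norm]
  have hAB : ‖extendAt k A‖ * ‖extendAt l B‖ ≤ ‖A‖ * ‖B‖ :=
    mul_le_mul (norm_extendAt_le k A) (norm_extendAt_le l B) (norm_nonneg _) (norm_nonneg _)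
  have hABnn : 0 ≤ ‖A‖ * ‖B‖ := by positivity
  rcases hi with hi | hi
  · have hs : 1 / 2 ≤ Real.sqrt (entropy σ) := Real.le_sqrt_of_sq_le (by linarith)
    have := (norm_covariance_le hρ (extendAt k A) (extendAt l B)).trans hAB
    nlinarith
  · set v : d k → ℂ := (hσ.1.1.eigenvectorBasis i).ofLp with hv
    set P := Matrix.vecMulVec v (star v) with hPdef
    have hnorm : ‖hσ.1.1.eigenvectorBasis i‖ = 1 := hσ.1.1.eigenvectorBasis.norm_eq_one i
    have hvv : star v ⬝ᵥ v = 1 := by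
      have := inner_self_eq_norm_sq_to_K (𝕜 := ℂ) (hσ.1.1.eigenvectorBasis i)
      rw [EuclideanSpace.inner_eq_star_dotProduct, hnorm, dotProduct_comm] at this
      simpa using this
    have hP : IsStarProjection (extendAt k P) :=
      (isStarProjection_vecMulVec hvv).map (extendAtHom k)
    have htr : (ρ * extendAt k P).trace.re = hσ.1.1.eigenvalues i := by
      rw [← trace_reduce_mul, ← hσdef, hPdef, Matrix.mul_vecMulVec, hv,
        hσ.1.1.mulVec_eigenvectorBasis, ← hv, Matrix.trace_vecMulVec,
        smul_dotProduct, dotProduct_comm, hvv]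
      simp
    have hcomp : P * A * P = (star v ⬝ᵥ A *ᵥ v) • P := vecMulVec_mul_mul_vecMulVec A v
    have hc : ‖star v ⬝ᵥ A *ᵥ v‖ ≤ ‖A‖ := by
      have := norm_inner_le_norm (𝕜 := ℂ) (hσ.1.1.eigenvectorBasis i) (WithLp.toLp 2 (A *ᵥ v))
      rw [EuclideanSpace.inner_eq_star_dotProduct, hnorm, one_mul, dotProduct_comm] at this
      refine this.trans ((Matrix.l2_opNorm_mulVec A (hσ.1.1.eigenvectorBasis i)).trans ?_)
      rw [hnorm, mul_one]
    have hcomp' : extendAt k P * extendAt k A * extendAt k P =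
        (star v ⬝ᵥ A *ᵥ v) • extendAt k P := by
      rw [← extendAt_mul, ← extendAt_mul, hcomp]
      exact map_smul (extendAtHom k) _ _
    have h := norm_covariance_le_of_compression hρ (norm_extendAt_le k A) hP hcomp' hc
      (commute_extendAt hkl A B) (commute_extendAt hkl P B)
    rw [htr] at h
    have hs : 3 / 2 * Real.sqrt (1 - hσ.1.1.eigenvalues i) ≤ Real.sqrt (entropy σ) := by
      refine Real.le_sqrt_of_sq_le ?_
      rw [mul_pow, Real.sq_sqrt]
      · linarith
      · rw [← hsum, sub_nonneg]
        exact Finset.single_le_sum (fun j _ => hσ.1.eigenvalues_nonneg j) (Finset.mem_univ i)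
    calc _ ≤ _ := h
      _ ≤ 3 * Real.sqrt (1 - hσ.1.1.eigenvalues i) * (‖A‖ * ‖B‖) := by
        gcongr
        exact norm_extendAt_le l B
      _ ≤ _ := by nlinarith

lemma covariance_comm_of_commute {n : Type*} [Fintype n] [DecidableEq n]
    {ρ X Y : Matrix n n ℂ} (h : Commute X Y) :
    covariance ρ X Y = covariance ρ Y X := by
  rw [covariance, covariance, h.eq, mul_comm (ρ * X).trace]

lemma norm_covariance_extendAt_le_min {k l : Fin N} (hkl : k ≠ l)
    {ρ : Matrix (∀ j, d j) (∀ j, d j) ℂ} (hρ : IsDensityMatrix ρ)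
    (A : Matrix (d k) (d k) ℂ) (B : Matrix (d l) (d l) ℂ) :
    ‖covariance ρ (extendAt k A) (extendAt l B)‖ ≤
      2 * (opNorm A * opNorm B *
        Real.sqrt (min (entropy (reduce k ρ)) (entropy (reduce l ρ)))) := by
  rcases min_choice (entropy (reduce k ρ)) (entropy (reduce l ρ)) with h | h <;> rw [h]
  · exact norm_covariance_extendAt_le hkl hρ A B
  · rw [covariance_comm_of_commute (commute_extendAt hkl A B), mul_comm (opNorm A)]
    exact norm_covariance_extendAt_le hkl.symm hρ B A

lemma opNorm_conjTranspose {n : Type*} [Fintype n] [DecidableEq n] (A : Matrix n n ℂ) :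
    opNorm Aᴴ = opNorm A :=
  Matrix.l2_opNorm_conjTranspose A

lemma variance_eq_covariance_re {n : Type*} [Fintype n] [DecidableEq n] {ρ : Matrix n n ℂ}
    (hρ : ρ.IsHermitian) (A : Matrix n n ℂ) : variance ρ A = (covariance ρ Aᴴ A).re := by
  rw [variance, covariance, trace_mul_conjTranspose hρ, Complex.sub_re]
  congr 1
  rw [Complex.star_def, ← Complex.normSq_eq_conj_mul_self, Complex.ofReal_re,
    Complex.normSq_eq_norm_sq]

lemma covariance_sum_sum {n ι : Type*} [Fintype n] [DecidableEq n] [Fintype ι]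
    (ρ : Matrix n n ℂ) (X Y : ι → Matrix n n ℂ) :
    covariance ρ (∑ k, X k) (∑ l, Y l) = ∑ k, ∑ l, covariance ρ (X k) (Y l) := by
  simp only [covariance, Finset.sum_sub_distrib, Finset.mul_sum, Finset.sum_mul,
    Matrix.trace_sum]
  rw [Finset.sum_comm]
  congr 1
  rw [Finset.sum_comm]

lemma variance_reduce {ρ : Matrix (∀ j, d j) (∀ j, d j) ℂ} (hρ : ρ.IsHermitian) (k : Fin N)
    (A : Matrix (d k) (d k) ℂ) :
    variance (reduce k ρ) A = (covariance ρ (extendAt k A)ᴴ (extendAt k A)).re := by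
  rw [← variance_eq_covariance_re hρ, variance, variance, trace_reduce_mul, trace_reduce_mul,
    extendAt_mul, extendAt_conjTranspose]

end EntropyBound

/-- bound on the coherent part of the variance. For arbitrary operators
`G_k` on `H_k` and `G = Σ_k (extension of G_k to H)`, every density matrix `ρ` on `H`
satisfies `Var_ρ(G) − Σ_k Var_{ρ_k}(G_k) ≤ 2·Σ_{k≠ℓ} ‖G_k‖_∞·‖G_ℓ‖_∞·√(min(s_k, s_ℓ))`,
the sum running over ordered pairs `(k,ℓ)` with `k ≠ ℓ`. -/
theorem coherent_variance_le_entropy_bound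
    [∀ k, Nonempty (d k)]
    (G : ∀ k, Matrix (d k) (d k) ℂ)
    (ρ : Matrix (∀ j, d j) (∀ j, d j) ℂ) (hρ : IsDensityMatrix ρ) :
    variance ρ (∑ k, extendAt k (G k)) - ∑ k, variance (reduce k ρ) (G k) ≤
      2 * ∑ k, ∑ l, if k ≠ l then
        opNorm (G k) * opNorm (G l) *
          Real.sqrt (min (entropy (reduce k ρ)) (entropy (reduce l ρ)))
      else 0 := by
  rw [variance_eq_covariance_re hρ.1.1, Matrix.conjTranspose_sum, covariance_sum_sum,
    Complex.re_sum, ← Finset.sum_sub_distrib, Finset.mul_sum]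
  refine Finset.sum_le_sum fun k _ => ?_
  rw [variance_reduce hρ.1.1, Complex.re_sum, ← Finset.add_sum_erase _ _ (Finset.mem_univ k),
    add_sub_cancel_left, ← Finset.add_sum_erase (a := k) _ _ (Finset.mem_univ k), if_neg (by simp),
    zero_add, Finset.mul_sum]
  refine Finset.sum_le_sum fun l hl => ?_
  have hkl : k ≠ l := (Finset.ne_of_mem_erase hl).symm
  rw [if_pos hkl, ← extendAt_conjTranspose, ← opNorm_conjTranspose (G k)]
  exact (Complex.re_le_norm _).trans (norm_covariance_extendAt_le_min hkl hρ _ _)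

end Paper
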